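/- Lemma 7: Let U₅ = 1 + η₂ + 2η₁ + 3η₀. If d > 3 is a prime divisor of gcd(U₅, (4^p − 1)/3), then one of the following holds: (1) d = 11; (2) d = 1 + 2p and 3p = 4(1+4y)² + 3; (3) d = 1 + 6p and 7p = 4(1+4y)² − 1; (4) d = 1 + 8p and p = 4(1+4y)² + 1. -/

import Mathlib

open Finset

/-- The cyclotomic class `D_i` of order 4 modulo `p` with respect to the
primitive root `θ`: `{θ^(i+4j) mod p : 0 ≤ j < (p-1)/4}`. -/
def cycD (p θ i : ℕ) : Finset ℕ :=
  (Finset.range ((p - 1) / 4)).image fun j => θ ^ (i + 4 * j) % p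

/-- `η_i = Σ_{t ∈ D_i} 4^t` as an integer. -/
def eta4 (p θ : ℕ) (i : ℕ) : ℤ := ∑ t ∈ cycD p θ i, (4 : ℤ) ^ t

/-- `H = η₀ + η₂ − η₁ − η₃`. -/
def Hval (p θ : ℕ) : ℤ := eta4 p θ 0 + eta4 p θ 2 - eta4 p θ 1 - eta4 p θ 3

/-!
Modulo `d` the number `4` is a primitive `p`-th root of unity, so `η₀, …, η₃` reduce to the quartic
Gauss periods over a field of characteristic `d`. There `η₀ + η₁ + η₂ + η₃ = -1`, and the
evaluation of Gauss and Jacobi sums of the quartic character `χ` gives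
`H² = p`, `(η₀ - η₂)² + (η₁ - η₃)² = -p` and `(η₀ - η₂)(η₁ - η₃) = y H`, where the `y` of the
cyclotomic number `(0,1)₄` enters because `2y` is the imaginary part of `J(χ, χ)`.
If `U₅ ≡ 0`, the first relation makes `2(η₀ - η₂ + η₁ - η₃)` equal to `1 - H`; squaring yields
`5p + 1 = 2H(1 + 4y)`, and squaring again shows `d ∣ (5p + 1)² - 4p(1 + 4y)²`.

On the other hand `d = 1 + 2kp`, since `4` has order `p` modulo `d`. The cofactor of `d` is then
`1 + lp` with `l ≡ 3 (mod 8)`, while comparing sizes gives `kl ≤ 12`. Of the five pairs `(k, l)`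
that remain, `(1, 3)` forces `d = 11`, `(2, 3)` is excluded because `2` would be a square modulo
`d = 1 + 4p ≡ 5 (mod 8)`, and `(1, 11)`, `(3, 3)`, `(4, 3)` are the three families.
-/

lemma sq_eq_sq_of_prime_eq_sq_add_mul_sq {p n a b c d : ℤ} (hp : Prime p) (hn : 1 < n)
    (hab : p = a ^ 2 + n * b ^ 2) (hcd : p = c ^ 2 + n * d ^ 2) :
    a ^ 2 = c ^ 2 := by
  have hp0 : 0 < p := lt_of_le_of_ne (by rw [hab]; positivity) hp.ne_zero.symm
  wlog h : p ∣ a * d - b * c generalizing d with H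
  · have hmul : p ∣ (a * d - b * c) * (a * d - b * -c) :=
      ⟨d ^ 2 - b ^ 2, by linear_combination (-d ^ 2) * hab + b ^ 2 * hcd⟩
    refine H (d := -d) (by rw [hcd]; ring) ?_
    rw [← dvd_neg]
    convert (hp.dvd_or_dvd hmul).resolve_left h using 1
    ring
  obtain ⟨k, hk⟩ := h
  have hbrahmagupta : p ^ 2 = (a * c + n * b * d) ^ 2 + n * (p * k) ^ 2 := by
    linear_combination p * hab + (a ^ 2 + n * b ^ 2) * hcd + n * (a * d - b * c + p * k) * hk
  have hk0 : k = 0 := by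
    by_contra hk0
    have : 0 < k ^ 2 := by positivity
    nlinarith [sq_nonneg (a * c + n * b * d), pow_pos hp0 2]
  rw [hk0, mul_zero] at hk
  apply mul_right_cancel₀ hp0.ne'
  linear_combination a ^ 2 * hcd - c ^ 2 * hab + n * (a * d + b * c) * hk

local notation "I" => (Zsqrtd.sqrtd : GaussianInt)

section GaussianInteger

lemma I_sq : I ^ 2 = -1 := by decide

lemma isPrimitiveRoot_I : IsPrimitiveRoot I 4 :=
  IsPrimitiveRoot.mk_of_lt _ (by norm_num) (by decide) fun l h0 h4 ↦ by
    interval_cases l <;> decide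

lemma map_I_sq {R : Type*} [Ring R] (φ : GaussianInt →+* R) : φ I ^ 2 = -1 := by
  rw [← map_pow, I_sq, map_neg, map_one]

lemma nonempty_gaussianInt_ringHom (K : Type*) [Field K] [IsAlgClosed K] :
    Nonempty (GaussianInt →+* K) := by
  obtain ⟨i, hi⟩ := IsAlgClosed.exists_pow_nat_eq (-1 : K) two_pos
  exact ⟨Zsqrtd.lift ⟨i, by simpa [sq] using hi⟩⟩

variable {F : Type*} [Field F]

lemma inv_apply_eq_star (χ : MulChar F GaussianInt) (a : F) : χ⁻¹ a = star (χ a) := by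
  rcases eq_or_ne a 0 with rfl | ha
  · simp only [MulChar.map_zero, star_zero]
  have hu : IsUnit (χ a) := ha.isUnit.map χ
  apply hu.mul_left_cancel
  rw [← Zsqrtd.norm_eq_mul_conj, (Zsqrtd.norm_eq_one_iff' (by norm_num) _).mpr hu,
    ← Pi.mul_apply, ← MulChar.coeToFun_mul, mul_inv_cancel, MulChar.one_apply ha.isUnit,
    Int.cast_one]

variable [Fintype F]

lemma jacobiSum_inv_inv (χ φ : MulChar F GaussianInt) :
    jacobiSum χ⁻¹ φ⁻¹ = star (jacobiSum χ φ) := by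
  simp only [jacobiSum, inv_apply_eq_star, star_sum, star_mul']

lemma norm_jacobiSum {χ φ : MulChar F GaussianInt} (hχ : χ ≠ 1) (hφ : φ ≠ 1) (hχφ : χ * φ ≠ 1) :
    (jacobiSum χ φ).norm = Fintype.card F := by
  have hinj := GaussianInt.toComplex_injective
  have hchar : ringChar ℂ ≠ ringChar F := by
    rw [ringChar.eq_zero]
    exact (CharP.ringChar_ne_zero_of_finite F).symm
  have h := jacobiSum_mul_jacobiSum_inv hchar
    ((MulChar.ringHomComp_ne_one_iff hinj).mpr hχ) ((MulChar.ringHomComp_ne_one_iff hinj).mpr hφ)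
    (by rwa [← MulChar.ringHomComp_mul, MulChar.ringHomComp_ne_one_iff hinj])
  rw [MulChar.ringHomComp_inv, MulChar.ringHomComp_inv, jacobiSum_ringHomComp,
    jacobiSum_ringHomComp, ← map_mul, jacobiSum_inv_inv, ← Zsqrtd.norm_eq_mul_conj] at h
  apply Int.cast_injective (α := ℂ)
  rwa [map_intCast, ← Int.cast_natCast] at h

lemma two_dvd_jacobiSum_add_one {χ φ : MulChar F GaussianInt} (hχ : χ ^ 4 = 1) (hφ : φ ^ 4 = 1)
    (hF : 4 ∣ Fintype.card F - 1) : 2 ∣ jacobiSum χ φ + 1 := by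
  obtain ⟨z, -, hz⟩ := exists_jacobiSum_eq_neg_one_add (by norm_num) hχ hφ hF isPrimitiveRoot_I
  exact ⟨-(z * I), by rw [hz]; linear_combination z * I_sq⟩

end GaussianInteger

section FiniteField

variable {F : Type*} [Field F] {R : Type*} [CommRing R]

lemma sum_pow_mul_pow_apply [IsDomain R] [DecidableEq R] {n : ℕ} {χ : MulChar F R}
    (hχ : χ ^ n = 1) {u : R} (hu : u ^ n = 1) (a : F) :
    ∑ j ∈ range n, u ^ j * (χ ^ j) a = if u * χ a = 1 then (n : R) else 0 := by
  rcases eq_or_ne a 0 with rfl | ha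
  · simp only [MulChar.map_zero, mul_zero, sum_const_zero, zero_ne_one, if_false]
  have hpow : ∀ j, (χ ^ j) a = χ a ^ j := fun j ↦ MulChar.pow_apply_coe χ j (Units.mk0 a ha)
  have hroot : (u * χ a) ^ n = 1 := by
    rw [mul_pow, hu, ← hpow, hχ, MulChar.one_apply ha.isUnit, one_mul]
  simp only [hpow, ← mul_pow]
  split_ifs with h
  · simp [h]
  · have := mul_neg_geom_sum (u * χ a) n
    rw [hroot, sub_self] at this
    exact (mul_eq_zero.mp this).resolve_left (sub_ne_zero.mpr (Ne.symm h))

variable [Fintype F]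

lemma jacobiSum_eq_apply_neg_one_mul (χ φ : MulChar F R) :
    jacobiSum χ φ = χ (-1) * jacobiSum χ (χ * φ)⁻¹ := by
  classical
  have hsub : ∀ ξ ζ : MulChar F R,
      jacobiSum ξ ζ = ∑ a ∈ univ.erase 1, ξ a * ζ (1 - a) := fun ξ ζ ↦ by
    rw [sum_erase _ (by simp only [sub_self, MulChar.map_zero, mul_zero]), jacobiSum]
  have hmem : ∀ a ∈ univ.erase (1 : F), a / (a - 1) ∈ univ.erase (1 : F) := by
    intro a ha
    have ha1 : a - 1 ≠ 0 := sub_ne_zero.mpr (ne_of_mem_erase ha)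
    rw [mem_erase, Ne, div_eq_one_iff_eq ha1]
    exact ⟨fun h ↦ one_ne_zero (sub_eq_self.mp h.symm), mem_univ _⟩
  have hinvol : ∀ a ∈ univ.erase (1 : F), a / (a - 1) / (a / (a - 1) - 1) = a := by
    intro a ha
    have ha1 : a - 1 ≠ 0 := sub_ne_zero.mpr (ne_of_mem_erase ha)
    field_simp
    ring
  rw [hsub, hsub, mul_sum]
  refine sum_bij' (fun a _ ↦ a / (a - 1)) (fun a _ ↦ a / (a - 1)) hmem hmem hinvol hinvol ?_
  intro a ha
  have ha1 : a - 1 ≠ 0 := sub_ne_zero.mpr (ne_of_mem_erase ha)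
  have hinv : (1 - a / (a - 1))⁻¹ = 1 - a := by field_simp; ring
  rw [MulChar.inv_apply', hinv, MulChar.mul_apply, ← mul_assoc, ← mul_assoc, ← map_mul, ← map_mul]
  congr 2
  field_simp
  ring

lemma sq_mul_card_filter_eq_sum_jacobiSum [IsDomain R] [DecidableEq R] {n : ℕ}
    {χ : MulChar F R} (hχ : χ ^ n = 1) {u v : R} (hu : u ^ n = 1) (hv : v ^ n = 1) :
    (n : R) ^ 2 * #{a : F | u * χ a = 1 ∧ v * χ (a + 1) = 1} =
      ∑ j ∈ range n, ∑ m ∈ range n, u ^ j * v ^ m * (χ ^ j) (-1) * jacobiSum (χ ^ j) (χ ^ m) := by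
  calc (n : R) ^ 2 * #{a : F | u * χ a = 1 ∧ v * χ (a + 1) = 1}
    _ = ∑ a : F, (if u * χ a = 1 then (n : R) else 0) *
          if v * χ (a + 1) = 1 then (n : R) else 0 := by
      rw [card_filter, Nat.cast_sum, mul_sum]
      refine sum_congr rfl fun a _ ↦ ?_
      split_ifs <;> simp_all [sq]
    _ = ∑ a : F, (∑ j ∈ range n, u ^ j * (χ ^ j) (-a)) *
          ∑ m ∈ range n, v ^ m * (χ ^ m) (1 - a) := by
      simp only [← sum_pow_mul_pow_apply hχ hu, ← sum_pow_mul_pow_apply hχ hv]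
      rw [← Equiv.sum_comp (Equiv.neg F)]
      simp only [Equiv.neg_apply, neg_add_eq_sub]
    _ = _ := by
      simp_rw [sum_mul_sum, jacobiSum, mul_sum]
      rw [sum_comm]
      refine sum_congr rfl fun j _ ↦ ?_
      rw [sum_comm]
      refine sum_congr rfl fun m _ ↦ sum_congr rfl fun a _ ↦ ?_
      rw [neg_eq_neg_one_mul a, map_mul]
      ring

end FiniteField

section OrderFour

variable {G : Type*} [Group G] {a : G}

lemma pow_three_eq_inv (ha : a ^ 4 = 1) : a ^ 3 = a⁻¹ :=
  eq_inv_of_mul_eq_one_left (by rw [← pow_succ, ha])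

lemma sq_inv_eq_sq (ha : a ^ 4 = 1) : (a ^ 2)⁻¹ = a ^ 2 :=
  inv_eq_of_mul_eq_one_right (by rw [← pow_add, ha])

lemma sq_ne_one_of_orderOf_eq_four (ha : orderOf a = 4) : a ^ 2 ≠ 1 :=
  pow_ne_one_of_lt_orderOf two_ne_zero (by rw [ha]; norm_num)

end OrderFour

section RingHomComp

variable {F K : Type*} [Field F] [CommRing K] {χ : MulChar F GaussianInt}

lemma orderOf_ringHomComp (hχ : orderOf χ = 4) (φ : GaussianInt →+* K) (h2 : (2 : K) ≠ 0) :
    orderOf (χ.ringHomComp φ) = 4 := by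
  have hχ4 : χ ^ 4 = 1 := hχ ▸ pow_orderOf_eq_one χ
  have hχ2 : χ ^ 2 ≠ 1 := sq_ne_one_of_orderOf_eq_four hχ
  obtain ⟨a, ha⟩ := MulChar.ne_one_iff.mp hχ2
  have ha_neg : (χ ^ 2) a = -1 := by
    refine (sq_eq_one_iff.mp ?_).resolve_left ha
    rw [← MulChar.pow_apply_coe, ← pow_mul, hχ4, MulChar.one_apply_coe]
  refine orderOf_eq_prime_pow (p := 2) (n := 1) (fun h ↦ h2 ?_) ?_
  · have hφ := DFunLike.congr_fun h (a : F)
    rw [pow_one, MulChar.ringHomComp_pow, MulChar.ringHomComp_apply, ha_neg, map_neg, map_one,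
      MulChar.one_apply_coe] at hφ
    linear_combination -hφ
  · rw [MulChar.ringHomComp_pow, show 2 ^ (1 + 1) = 4 by norm_num, hχ4, MulChar.ringHomComp_one]

lemma ringHomComp_ne_one (hχ : orderOf χ = 4) (φ : GaussianInt →+* K) (h2 : (2 : K) ≠ 0) :
    χ.ringHomComp φ ≠ 1 := fun h ↦ by
  simpa [h] using orderOf_ringHomComp hχ φ h2

lemma ringHomComp_sq_ne_one (hχ : orderOf χ = 4) (φ : GaussianInt →+* K) (h2 : (2 : K) ≠ 0) :
    χ.ringHomComp φ ^ 2 ≠ 1 :=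
  sq_ne_one_of_orderOf_eq_four (orderOf_ringHomComp hχ φ h2)

end RingHomComp

section QuarticCharacter

variable {F : Type*} [Field F] [Fintype F] {χ : MulChar F GaussianInt}

lemma jacobiSum_self_eq_apply_neg_one_mul (hχ : χ ^ 4 = 1) :
    jacobiSum χ χ = χ (-1) * jacobiSum χ (χ ^ 2) := by
  rw [jacobiSum_eq_apply_neg_one_mul χ χ, ← sq, sq_inv_eq_sq hχ]

lemma card_filter_apply_add_one_eq_I (hχ : orderOf χ = 4) (hneg : χ (-1) = -1) :
    16 * (#{a : F | χ a = 1 ∧ χ (a + 1) = I} : ℤ) =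
      Fintype.card F + 1 - 2 * (jacobiSum χ χ).re - 4 * (jacobiSum χ χ).im := by
  have hχ4 : χ ^ 4 = 1 := hχ ▸ pow_orderOf_eq_one χ
  have h1 : χ ≠ 1 := fun h ↦ by simp [h] at hχ
  have h2 : χ ^ 2 ≠ 1 := sq_ne_one_of_orderOf_eq_four hχ
  have h12 : jacobiSum χ (χ ^ 2) = -jacobiSum χ χ := by
    rw [jacobiSum_self_eq_apply_neg_one_mul hχ4, hneg]; ring
  have h32 : jacobiSum χ⁻¹ (χ ^ 2) = -star (jacobiSum χ χ) := by
    rw [← sq_inv_eq_sq hχ4, jacobiSum_inv_inv, h12, star_neg]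
  have h13 : jacobiSum χ χ⁻¹ = 1 := by rw [jacobiSum_nontrivial_inv h1, hneg, neg_neg]
  have h22 : jacobiSum (χ ^ 2) (χ ^ 2) = -1 := by
    nth_rw 2 [← sq_inv_eq_sq hχ4]
    rw [jacobiSum_nontrivial_inv h2, MulChar.pow_apply' _ two_ne_zero, hneg, neg_one_sq]
  have hinv_neg : χ⁻¹ (-1) = -1 := by rw [inv_apply_eq_star, hneg]; rfl
  have hsq_neg : (χ ^ 2) (-1) = 1 := by
    rw [MulChar.pow_apply' _ two_ne_zero, hneg, neg_one_sq]
  have hI (z : GaussianInt) : -I * z = 1 ↔ z = I :=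
    ⟨fun h ↦ by linear_combination I * h + z * I_sq, fun h ↦ by rw [h]; decide⟩
  have hcount := sq_mul_card_filter_eq_sum_jacobiSum hχ4 (one_pow 4) (v := -I) (by decide)
  simp only [sum_range_succ, sum_range_zero, pow_three_eq_inv hχ4, pow_zero, pow_one,
    jacobiSum_comm χ 1, jacobiSum_comm (χ ^ 2) 1, jacobiSum_comm χ⁻¹ 1, jacobiSum_comm (χ ^ 2) χ,
    jacobiSum_comm χ⁻¹ χ, jacobiSum_comm (χ ^ 2) χ⁻¹, jacobiSum_one_one,
    jacobiSum_one_nontrivial h1, jacobiSum_one_nontrivial h2,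
    jacobiSum_one_nontrivial (inv_ne_one.mpr h1), h12, h13, h22, h32, jacobiSum_inv_inv, hneg,
    hsq_neg, hinv_neg, MulChar.one_apply isUnit_one.neg, hI, one_mul] at hcount
  have hclosed : (16 * #{a : F | χ a = 1 ∧ χ (a + 1) = I} : GaussianInt) = Fintype.card F + 1 +
      (2 * I - 1) * jacobiSum χ χ - (2 * I + 1) * star (jacobiSum χ χ) := by
    push_cast at hcount
    linear_combination hcount + (-2 + 2 * I + jacobiSum χ χ + star (jacobiSum χ χ) +
      2 * I * star (jacobiSum χ χ)) * I_sq
  have hre := congrArg Zsqrtd.re hclosed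
  simp only [Zsqrtd.re_mul, Zsqrtd.re_add, Zsqrtd.re_sub, Zsqrtd.im_add, Zsqrtd.im_sub,
    Zsqrtd.im_mul, Zsqrtd.re_star, Zsqrtd.im_star, Zsqrtd.re_sqrtd, Zsqrtd.im_sqrtd,
    Zsqrtd.re_natCast, Zsqrtd.im_natCast, Zsqrtd.re_ofNat, Zsqrtd.im_ofNat, Zsqrtd.re_one,
    Zsqrtd.im_one, Nat.cast_ofNat] at hre
  linarith

lemma im_jacobiSum_eq_of_card_filter (hχ : orderOf χ = 4) (hneg : χ (-1) = -1)
    (hF : Prime (Fintype.card F : ℤ)) {x y : ℤ} (hx : x % 4 = 1)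
    (hxy : (Fintype.card F : ℤ) = x ^ 2 + 4 * y ^ 2)
    (hy : 16 * (#{a : F | χ a = 1 ∧ χ (a + 1) = I} : ℤ) =
      Fintype.card F + 1 + 2 * x - 8 * y) :
    (jacobiSum χ χ).im = 2 * y := by
  have hχ4 : χ ^ 4 = 1 := hχ ▸ pow_orderOf_eq_one χ
  have h1 : χ ≠ 1 := fun h ↦ by simp [h] at hχ
  have h2 : χ * χ ≠ 1 := sq χ ▸ sq_ne_one_of_orderOf_eq_four hχ
  obtain ⟨z, hz⟩ := two_dvd_jacobiSum_add_one hχ4 hχ4 (hχ ▸ χ.orderOf_dvd_card_sub_one)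
  have him : (jacobiSum χ χ).im = 2 * z.im := by simpa using congrArg Zsqrtd.im hz
  have hline := card_filter_apply_add_one_eq_I hχ hneg
  have hnorm : (Fintype.card F : ℤ) = (jacobiSum χ χ).re ^ 2 + 4 * z.im ^ 2 := by
    rw [← norm_jacobiSum h1 h1 h2, Zsqrtd.norm_def, him]
    ring
  have hre := sq_eq_sq_of_prime_eq_sq_add_mul_sq hF (by norm_num) hxy hnorm
  rcases sq_eq_sq_iff_eq_or_eq_neg.mp hre with hre | hre <;> omega

end QuarticCharacter

section GaussPeriod

variable {F : Type*} [Field F] [Fintype F] {R R' : Type*} [CommRing R] [DecidableEq R] [CommRing R']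

/-- The Gauss period of a cyclotomic class: the sum of the additive character `ψ` over the class
`{a | χ a = μ ^ k}`, where `μ` is meant to be a primitive root of unity of the order of `χ`. -/
def gaussPeriod (χ : MulChar F R) (μ : R) (ψ : AddChar F R') (k : ℕ) : R' :=
  ∑ a with χ a = μ ^ k, ψ a

lemma gaussSum_ringHomComp_pow_eq_sum_gaussPeriod [IsDomain R] {n : ℕ} [NeZero n]
    {χ : MulChar F R} (hχ : χ ^ n = 1) {μ : R} (hμ : IsPrimitiveRoot μ n) (φ : R →+* R')
    (ψ : AddChar F R') (j : ℕ) :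
    gaussSum ((χ ^ j).ringHomComp φ) ψ = ∑ k ∈ range n, φ μ ^ (j * k) * gaussPeriod χ μ ψ k := by
  simp only [gaussPeriod, sum_filter, mul_sum, gaussSum]
  rw [sum_comm]
  refine sum_congr rfl fun a _ ↦ ?_
  rcases eq_or_ne a 0 with rfl | ha
  · have h0 (k : ℕ) : (0 : R) ≠ μ ^ k := (pow_ne_zero k (hμ.ne_zero (NeZero.ne n))).symm
    simp only [MulChar.map_zero, zero_mul, h0, if_false, mul_zero, sum_const_zero]
  obtain ⟨k, hk, hak⟩ := MulChar.exists_apply_eq_pow hχ hμ ha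
  have hpow : (χ ^ j) a = χ a ^ j := MulChar.pow_apply_coe χ j (Units.mk0 a ha)
  rw [sum_eq_single_of_mem k (mem_range.mpr hk), if_pos hak, MulChar.ringHomComp_apply, hpow, hak,
    ← pow_mul, map_pow, mul_comm j k]
  intro l hl hlk
  rw [if_neg, mul_zero]
  exact fun h ↦ hlk (hμ.pow_inj (mem_range.mp hl) hk (h.symm.trans hak))

end GaussPeriod

section QuarticPeriod

variable {F : Type*} [Field F] [Fintype F] {χ : MulChar F GaussianInt} {K : Type*} [CommRing K]
  {ψ : AddChar F K}

local notation "η" => gaussPeriod χ I ψ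

lemma gaussSum_eq_gaussPeriod (hχ : χ ^ 4 = 1) (φ : GaussianInt →+* K) :
    gaussSum (χ.ringHomComp φ) ψ = η 0 - η 2 + φ I * (η 1 - η 3) := by
  have h := gaussSum_ringHomComp_pow_eq_sum_gaussPeriod hχ isPrimitiveRoot_I φ ψ 1
  simp only [pow_one, sum_range_succ, sum_range_zero] at h
  rw [h]
  linear_combination (η 2 + φ I * η 3) * map_I_sq φ

lemma gaussSum_sq_eq_gaussPeriod (hχ : χ ^ 4 = 1) (φ : GaussianInt →+* K) :
    gaussSum ((χ ^ 2).ringHomComp φ) ψ = η 0 - η 1 + η 2 - η 3 := by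
  have h := gaussSum_ringHomComp_pow_eq_sum_gaussPeriod hχ isPrimitiveRoot_I φ ψ 2
  simp only [pow_one, sum_range_succ, sum_range_zero, pow_mul, map_I_sq] at h
  rw [h]
  ring

lemma gaussSum_inv_eq_gaussPeriod (hχ : χ ^ 4 = 1) (φ : GaussianInt →+* K) :
    gaussSum (χ⁻¹.ringHomComp φ) ψ = η 0 - η 2 - φ I * (η 1 - η 3) := by
  have h := gaussSum_ringHomComp_pow_eq_sum_gaussPeriod hχ isPrimitiveRoot_I φ ψ 3
  rw [pow_three_eq_inv hχ] at h
  simp only [sum_range_succ, sum_range_zero] at h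
  rw [h]
  linear_combination (φ I * η 1 + (φ I ^ 4 - φ I ^ 2 + 1) * η 2 +
    (φ I ^ 7 - φ I ^ 5 + φ I ^ 3 - φ I) * η 3) * map_I_sq φ

variable [IsDomain K]

lemma sum_gaussPeriod (hχ : χ ^ 4 = 1) (φ : GaussianInt →+* K) (hψ : ψ.IsPrimitive) :
    η 0 + η 1 + η 2 + η 3 = -1 := by
  have hψ1 : ψ ≠ 1 := fun h ↦ hψ one_ne_zero (by rw [h]; ext; simp)
  have hperiod := gaussSum_ringHomComp_pow_eq_sum_gaussPeriod hχ isPrimitiveRoot_I φ ψ 0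
  rw [pow_zero, MulChar.ringHomComp_one, gaussSum_one_left hψ1] at hperiod
  simpa [sum_range_succ] using hperiod.symm

variable (hχ : orderOf χ = 4) (φ : GaussianInt →+* K) (h2 : (2 : K) ≠ 0)
include hχ φ h2

lemma gaussPeriod_alternating_sq (hψ : ψ.IsPrimitive) :
    (η 0 - η 1 + η 2 - η 3) ^ 2 = Fintype.card F := by
  have hχ4 : χ ^ 4 = 1 := hχ ▸ pow_orderOf_eq_one χ
  have hquad : (χ.ringHomComp φ ^ 2).IsQuadratic := by
    rw [MulChar.isQuadratic_iff_sq_eq_one, ← pow_mul, MulChar.ringHomComp_pow, hχ4,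
      MulChar.ringHomComp_one]
  have hneg : (χ.ringHomComp φ ^ 2) (-1) = 1 := by
    rw [MulChar.pow_apply' _ two_ne_zero, ← map_pow, neg_one_sq, map_one]
  rw [← gaussSum_sq_eq_gaussPeriod hχ4 φ, ← MulChar.ringHomComp_pow,
    gaussSum_sq (ringHomComp_sq_ne_one hχ φ h2) hquad hψ, hneg, one_mul]

lemma gaussPeriod_sub_sq_add_sub_sq (hψ : ψ.IsPrimitive) :
    (η 0 - η 2) ^ 2 + (η 1 - η 3) ^ 2 = φ (χ (-1)) * Fintype.card F := by
  have hχ4 : χ ^ 4 = 1 := hχ ▸ pow_orderOf_eq_one χ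
  have h := gaussSum_mul_gaussSum_pow_orderOf_sub_one (ringHomComp_ne_one hχ φ h2) hψ
  rw [orderOf_ringHomComp hχ φ h2, MulChar.ringHomComp_pow, pow_three_eq_inv hχ4,
    gaussSum_eq_gaussPeriod hχ4, gaussSum_inv_eq_gaussPeriod hχ4, MulChar.ringHomComp_apply] at h
  rw [← h]
  linear_combination (η 1 - η 3) ^ 2 * map_I_sq φ

lemma two_mul_gaussPeriod_sub_mul_sub :
    2 * ((η 0 - η 2) * (η 1 - η 3)) = (jacobiSum χ χ).im * (η 0 - η 1 + η 2 - η 3) := by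
  have hχ4 : χ ^ 4 = 1 := hχ ▸ pow_orderOf_eq_one χ
  have hsq := ringHomComp_sq_ne_one hχ φ h2
  have hJ := jacobiSum_mul_nontrivial (sq (χ.ringHomComp φ) ▸ hsq) ψ
  have hJinv := jacobiSum_mul_nontrivial (χ := χ⁻¹.ringHomComp φ) (φ := χ⁻¹.ringHomComp φ) (by
    rwa [← MulChar.ringHomComp_inv, ← sq, inv_pow, inv_ne_one]) ψ
  rw [← sq, MulChar.ringHomComp_pow, inv_pow, sq_inv_eq_sq hχ4, gaussSum_sq_eq_gaussPeriod hχ4,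
    gaussSum_inv_eq_gaussPeriod hχ4, jacobiSum_ringHomComp, jacobiSum_inv_inv] at hJinv
  rw [← sq, MulChar.ringHomComp_pow, gaussSum_sq_eq_gaussPeriod hχ4, gaussSum_eq_gaussPeriod hχ4,
    jacobiSum_ringHomComp] at hJ
  have him : φ (jacobiSum χ χ) - φ (star (jacobiSum χ χ)) = 2 * φ I * (jacobiSum χ χ).im := by
    rw [← map_sub, ← map_intCast φ, ← map_ofNat φ 2, ← map_mul, ← map_mul]
    congr 1
    ext <;> simp
    ring
  have hI0 : φ I ≠ 0 := fun h ↦ by simpa [h] using map_I_sq φ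
  apply mul_left_cancel₀ (mul_ne_zero h2 hI0)
  linear_combination hJinv - hJ + (η 0 - η 1 + η 2 - η 3) * him

lemma sq_eq_of_gaussPeriod_relation (hψ : ψ.IsPrimitive) (hneg : χ (-1) = -1) {y : ℤ}
    (hy : (jacobiSum χ χ).im = 2 * y) (hU : 1 + η 2 + 2 * η 1 + 3 * η 0 = 0) :
    (5 * (Fintype.card F : K) + 1) ^ 2 = 4 * Fintype.card F * (1 + 4 * y) ^ 2 := by
  have hsum := sum_gaussPeriod (hχ ▸ pow_orderOf_eq_one χ) φ hψ
  have halt := gaussPeriod_alternating_sq hχ φ h2 hψ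
  have hsq := gaussPeriod_sub_sq_add_sub_sq hχ φ h2 hψ
  have hmul := two_mul_gaussPeriod_sub_mul_sub hχ φ h2 (ψ := ψ)
  rw [hneg, map_neg, map_one, neg_one_mul] at hsq
  rw [hy, Int.cast_mul, Int.cast_ofNat] at hmul
  set H := η 0 - η 1 + η 2 - η 3 with hH
  have hlin : 2 * ((η 0 - η 2) + (η 1 - η 3)) = 1 - H := by
    rw [hH]; linear_combination 2 * hU - 3 * hsum
  have hH1 : 5 * (Fintype.card F : K) + 1 = 2 * H * (1 + 4 * y) := by
    linear_combination (-(2 * ((η 0 - η 2) + (η 1 - η 3))) - (1 - H)) * hlin + 4 * hsq +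
      4 * hmul - halt
  rw [hH1, ← halt]
  ring

end QuarticPeriod

section CyclotomicClass

variable {p : ℕ} [Fact p.Prime]

lemma mem_zpowers_of_isPrimitiveRoot {g : (ZMod p)ˣ} (hg : IsPrimitiveRoot (g : ZMod p) (p - 1))
    (u : (ZMod p)ˣ) : u ∈ Subgroup.zpowers g := by
  have : NeZero (p - 1) := ⟨(Nat.sub_pos_of_lt (Fact.out : p.Prime).one_lt).ne'⟩
  rw [(IsPrimitiveRoot.coe_units_iff.mp hg).zpowers_eq, mem_rootsOfUnity]
  exact ZMod.units_pow_card_sub_one_eq_one p u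

lemma exists_mulChar_apply_eq {R : Type*} [CommRing R] {g : ZMod p}
    (hg : IsPrimitiveRoot g (p - 1)) {ζ : R} (hζ : ζ ^ (p - 1) = 1) :
    ∃ χ : MulChar (ZMod p) R, χ g = ζ := by
  have hp : p - 1 ≠ 0 := (Nat.sub_pos_of_lt (Fact.out : p.Prime).one_lt).ne'
  have hmem : Units.ofPowEqOne ζ (p - 1) hζ hp ∈ rootsOfUnity (Fintype.card (ZMod p)ˣ) R := by
    rw [mem_rootsOfUnity, ZMod.card_units, Units.pow_ofPowEqOne]
  lift g to (ZMod p)ˣ using hg.isUnit hp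
  exact ⟨_, MulChar.ofRootOfUnity_spec hmem (mem_zpowers_of_isPrimitiveRoot hg)⟩

lemma orderOf_mulChar_eq_orderOf_apply {R : Type*} [CommRing R] {g : ZMod p}
    (hg : IsPrimitiveRoot g (p - 1)) (χ : MulChar (ZMod p) R) : orderOf χ = orderOf (χ g) := by
  lift g to (ZMod p)ˣ using hg.isUnit (Nat.sub_pos_of_lt (Fact.out : p.Prime).one_lt).ne'
  refine orderOf_eq_orderOf_iff.mpr fun m ↦ ?_
  rw [MulChar.eq_iff (mem_zpowers_of_isPrimitiveRoot hg), MulChar.pow_apply_coe,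
    MulChar.one_apply_coe]

lemma filter_apply_eq_image_pow {R : Type*} [CommRing R] [Nontrivial R] [DecidableEq R]
    {g : ZMod p} (hg : IsPrimitiveRoot g (p - 1)) {n k : ℕ} (hn : n ∣ p - 1) (hk : k < n)
    {χ : MulChar (ZMod p) R} {μ : R} (hμ : IsPrimitiveRoot μ n) (hχ : χ g = μ) :
    ({a | χ a = μ ^ k} : Finset (ZMod p)) =
      (range ((p - 1) / n)).image fun j ↦ g ^ (k + n * j) := by
  have : NeZero (p - 1) := ⟨(Nat.sub_pos_of_lt (Fact.out : p.Prime).one_lt).ne'⟩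
  ext a
  rw [mem_filter_univ, mem_image]
  refine ⟨fun ha ↦ ?_, ?_⟩
  · have ha0 : a ≠ 0 := by
      rintro rfl
      exact ((hμ.isUnit (by omega)).pow k).ne_zero (ha ▸ MulChar.map_zero χ)
    obtain ⟨m, hm, rfl⟩ := hg.eq_pow_of_pow_eq_one (ZMod.pow_card_sub_one_eq_one ha0)
    rw [map_pow, hχ, (hμ.isOfFinOrder (by omega)).pow_inj_mod, ← hμ.eq_orderOf,
      Nat.mod_eq_of_lt hk] at ha
    exact ⟨m / n, mem_range.mpr (Nat.div_lt_div_of_lt_of_dvd hn hm), by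
      rw [← ha, Nat.mod_add_div]⟩
  · rintro ⟨j, -, rfl⟩
    rw [map_pow, hχ, pow_add, pow_mul, hμ.pow_eq_one, one_pow, mul_one]

variable {θ : ℕ} {χ : MulChar (ZMod p) GaussianInt}

lemma cycD_eq_image_val (hp : 4 ∣ p - 1) (hθ : IsPrimitiveRoot (θ : ZMod p) (p - 1))
    (hχ : χ θ = I) {k : ℕ} (hk : k < 4) :
    cycD p θ k = ({a | χ a = I ^ k} : Finset (ZMod p)).image ZMod.val := by
  rw [filter_apply_eq_image_pow hθ hp hk isPrimitiveRoot_I hχ, image_image, cycD]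
  refine image_congr fun j _ ↦ ?_
  rw [Function.comp_apply, ← Nat.cast_pow, ZMod.val_natCast]

lemma card_filter_add_one_mem_cycD (hp : 4 ∣ p - 1) (hθ : IsPrimitiveRoot (θ : ZMod p) (p - 1))
    (hχ : χ θ = I) :
    #{a ∈ cycD p θ 0 | (a + 1) % p ∈ cycD p θ 1} =
      #{a : ZMod p | χ a = 1 ∧ χ (a + 1) = I} := by
  have hinj := ZMod.val_injective p
  have hsucc (a : ZMod p) : (a.val + 1) % p = (a + 1).val := by
    rw [ZMod.val_add, ZMod.val_one]
  rw [cycD_eq_image_val hp hθ hχ (by norm_num), cycD_eq_image_val hp hθ hχ (by norm_num),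
    filter_image, card_image_of_injective _ hinj, filter_filter]
  simp only [hsucc, hinj.mem_finset_image, mem_filter_univ, pow_zero, pow_one]

lemma cast_eta4_eq_gaussPeriod (hp : 4 ∣ p - 1) (hθ : IsPrimitiveRoot (θ : ZMod p) (p - 1))
    (hχ : χ θ = I) {K : Type*} [CommRing K] (h4 : (4 : K) ^ p = 1) {k : ℕ} (hk : k < 4) :
    (eta4 p θ k : K) = gaussPeriod χ I (AddChar.zmodChar p h4) k := by
  rw [eta4, cycD_eq_image_val hp hθ hχ hk, sum_image (ZMod.val_injective p).injOn, gaussPeriod]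
  push_cast
  rfl

lemma apply_neg_one_eq_neg_one (hp : p % 8 = 5) (hθ : IsPrimitiveRoot (θ : ZMod p) (p - 1))
    (hχ : χ θ = I) : χ (-1) = -1 := by
  have hroot : IsPrimitiveRoot ((θ : ZMod p) ^ ((p - 1) / 2)) 2 :=
    hθ.pow (by omega) (by omega)
  rw [← hroot.eq_neg_one_of_two_right, map_pow, hχ,
    show (p - 1) / 2 = 4 * ((p - 1) / 8) + 2 by omega, pow_add, pow_mul,
    isPrimitiveRoot_I.pow_eq_one, one_pow, one_mul, I_sq]

lemma intCast_eq_zero_of_eta4_relation (hp : p % 8 = 5) {x y : ℤ} (hx : x % 4 = 1)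
    (hxy : (p : ℤ) = x ^ 2 + 4 * y ^ 2) (hθ : IsPrimitiveRoot (θ : ZMod p) (p - 1))
    (hy : 16 * (#{a ∈ cycD p θ 0 | (a + 1) % p ∈ cycD p θ 1} : ℤ) = p + 1 + 2 * x - 8 * y)
    {K : Type*} [CommRing K] [IsDomain K] (φ : GaussianInt →+* K) (h4 : IsPrimitiveRoot (4 : K) p)
    (hU : ((1 + eta4 p θ 2 + 2 * eta4 p θ 1 + 3 * eta4 p θ 0 : ℤ) : K) = 0) :
    (((5 * p + 1) ^ 2 - 4 * p * (1 + 4 * y) ^ 2 : ℤ) : K) = 0 := by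
  have hp4 : 4 ∣ p - 1 := by omega
  obtain ⟨χ, hχ⟩ := exists_mulChar_apply_eq hθ ((isPrimitiveRoot_I.pow_eq_one_iff_dvd _).mpr hp4)
  have horder : orderOf χ = 4 := by
    rw [orderOf_mulChar_eq_orderOf_apply hθ, hχ, ← isPrimitiveRoot_I.eq_orderOf]
  have hneg := apply_neg_one_eq_neg_one hp hθ hχ
  have h2 : (2 : K) ≠ 0 := fun h ↦ h4.ne_zero (Fact.out : p.Prime).ne_zero
    (by linear_combination 2 * h)
  have hprime : Prime (Fintype.card (ZMod p) : ℤ) := by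
    rw [ZMod.card]; exact Nat.prime_iff_prime_int.mp Fact.out
  have him : (jacobiSum χ χ).im = 2 * y := by
    rw [card_filter_add_one_mem_cycD hp4 hθ hχ] at hy
    apply im_jacobiSum_eq_of_card_filter horder hneg hprime hx <;> rwa [ZMod.card]
  have hψ := AddChar.zmodChar_primitive_of_primitive_root p h4
  have h := sq_eq_of_gaussPeriod_relation horder φ h2 hψ hneg him (by
    simp only [← cast_eta4_eq_gaussPeriod hp4 hθ hχ h4.pow_eq_one, Nat.ofNat_pos, Nat.reduceLT]
    exact_mod_cast hU)
  rw [ZMod.card] at h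
  push_cast
  exact sub_eq_zero.mpr h

end CyclotomicClass

section PrimeDivisor

variable {n p : ℕ}

lemma isPrimitiveRoot_four (hn : 3 < n) (hp : p.Prime) (h : (n : ℤ) ∣ 4 ^ p - 1)
    (K : Type*) [CommRing K] [CharP K n] : IsPrimitiveRoot (4 : K) p := by
  have := Fact.mk hp
  have h3 : ((3 : ℕ) : K) ≠ 0 := by
    rw [Ne, CharP.cast_eq_zero_iff K n]
    exact Nat.not_dvd_of_pos_of_lt (by norm_num) hn
  have hpow : (4 : K) ^ p = 1 := by
    rw [← CharP.intCast_eq_zero_iff K n] at h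
    push_cast at h
    exact sub_eq_zero.mp h
  have hone : (4 : K) ≠ 1 := fun h ↦ h3 (by push_cast; linear_combination h)
  exact orderOf_eq_prime hpow hone ▸ IsPrimitiveRoot.orderOf 4

variable [Fact n.Prime]

lemma two_mul_dvd_sub_one (hn : 3 < n) (hp : p.Prime) (hp2 : Odd p)
    (h : (n : ℤ) ∣ 4 ^ p - 1) : 2 * p ∣ n - 1 := by
  have hroot := isPrimitiveRoot_four hn hp h (ZMod n)
  have hpn : p ∣ n - 1 := by
    rw [hroot.eq_orderOf]
    exact ZMod.orderOf_dvd_card_sub_one (hroot.ne_zero hp.ne_zero)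
  have hodd := (Fact.out : n.Prime).eq_two_or_odd
  exact (Nat.coprime_two_left.mpr hp2).mul_dvd_of_dvd_of_dvd (by omega) hpn

-- Otherwise `2 ^ ((n - 1) / 2) = 4 ^ p = 1`, so `2` is a square modulo `n ≡ 5 [MOD 8]`.
lemma ne_one_add_four_mul (hp2 : Odd p) (h : (n : ℤ) ∣ 4 ^ p - 1) : n ≠ 1 + 4 * p := by
  intro hnp
  have hp := Nat.odd_iff.mp hp2
  have h2 : (2 : ZMod n) ≠ 0 := Ring.two_ne_zero (by rw [ZMod.ringChar_zmod_n]; omega)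
  have hsq : IsSquare (2 : ZMod n) := by
    rw [ZMod.euler_criterion n h2, show n / 2 = 2 * p by omega, pow_mul, ← sub_eq_zero]
    rw [← ZMod.intCast_zmod_eq_zero_iff_dvd] at h
    push_cast at h
    norm_num [h]
  have := (ZMod.exists_sq_eq_two_iff (by omega)).mp hsq
  omega

lemma natCast_dvd_of_dvd_eta4_relation [Fact p.Prime] (hp : p % 8 = 5) {x y : ℤ} (hx : x % 4 = 1)
    (hxy : (p : ℤ) = x ^ 2 + 4 * y ^ 2) {θ : ℕ} (hθ : IsPrimitiveRoot (θ : ZMod p) (p - 1))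
    (hy : 16 * (#{a ∈ cycD p θ 0 | (a + 1) % p ∈ cycD p θ 1} : ℤ) = p + 1 + 2 * x - 8 * y)
    (hn : 3 < n) (h : (n : ℤ) ∣ 4 ^ p - 1)
    (hU : (n : ℤ) ∣ 1 + eta4 p θ 2 + 2 * eta4 p θ 1 + 3 * eta4 p θ 0) :
    (n : ℤ) ∣ (5 * p + 1) ^ 2 - 4 * p * (1 + 4 * y) ^ 2 := by
  let K := AlgebraicClosure (ZMod n)
  obtain ⟨φ⟩ := nonempty_gaussianInt_ringHom K
  rw [← CharP.intCast_eq_zero_iff K n] at hU ⊢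
  have h4 := isPrimitiveRoot_four hn Fact.out h K
  exact intCast_eq_zero_of_eta4_relation hp hx hxy hθ hy φ h4 hU

end PrimeDivisor

section Cofactor

lemma exists_cofactor_of_one_add_mul_dvd {P m c : ℤ} (hP : P ≠ 0) (h : 1 + m * P ∣ 1 + c * P) :
    ∃ l, m + l + m * l * P = c := by
  obtain ⟨e, he⟩ := h
  obtain ⟨l, rfl⟩ : ∃ l, e = 1 + l * P := ⟨c - m * e, by linear_combination -he⟩
  exact ⟨l, mul_right_cancel₀ hP (by linear_combination -he)⟩

-- Below, `1 + l * P` is the cofactor of `1 + 2 * k * P` in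
-- `(5 * P + 1) ^ 2 - 4 * P * (1 + 4 * y) ^ 2`.
variable {P k l y : ℤ}

lemma cofactor_emod_eight (hP : P % 8 = 5)
    (h : 2 * k + l + 2 * k * l * P = 25 * P + 10 - 4 * (1 + 4 * y) ^ 2) : l % 8 = 3 := by
  obtain ⟨r, hr⟩ : ∃ r, P = 8 * r + 5 := ⟨P / 8, by omega⟩
  have hcop : IsCoprime 8 (2 * k + 1) :=
    (show IsCoprime (2 : ℤ) (2 * k + 1) from ⟨-k, 1, by ring⟩).pow_left (m := 3)
  have hdvd : 8 ∣ (2 * k + 1) * (l - 3) :=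
    ⟨25 * r + 16 - 4 * y - 8 * y ^ 2 - k - k * l - 2 * k * l * r, by
      rw [hr] at h; linear_combination h⟩
  have := hcop.dvd_of_dvd_mul_left hdvd
  omega

lemma cofactor_nonneg (hk : 0 < k) (hP : 4 * y ^ 2 + 1 ≤ P)
    (h : 2 * k + l + 2 * k * l * P = 25 * P + 10 - 4 * (1 + 4 * y) ^ 2) : 0 ≤ l := by
  have hP1 : 1 ≤ P := by nlinarith [sq_nonneg y]
  have hpos : 0 < 2 * k + l * (1 + 2 * k * P) := by nlinarith [sq_nonneg (y - 1)]
  by_contra! hl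
  nlinarith [mul_pos hk (by linarith : 0 < P)]

lemma mul_cofactor_le (hk : 0 < k) (hl : 3 ≤ l) (hP : 5 ≤ P)
    (h : 2 * k + l + 2 * k * l * P = 25 * P + 10 - 4 * (1 + 4 * y) ^ 2) : k * l ≤ 12 := by
  by_contra! hkl
  have hklP : 13 * P ≤ k * l * P := mul_le_mul_of_nonneg_right hkl (by linarith)
  have hy : 0 < (1 + 4 * y) ^ 2 := sq_pos_of_ne_zero (by omega)
  linarith

lemma eq_five_of_nineteen_mul (hP : 4 * y ^ 2 + 1 ≤ P) (h : 19 * P = 4 * (1 + 4 * y) ^ 2 - 5) :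
    P = 5 := by
  have hy : (3 * y - 5) * (y - 1) ≤ 0 := by nlinarith
  have hy1 : y = 1 := le_antisymm (by nlinarith) (by nlinarith)
  subst hy1
  linarith

lemma cofactor_cases (hk : 0 < k) (hP8 : P % 8 = 5) (hP : 4 * y ^ 2 + 1 ≤ P)
    (hdvd : 1 + 2 * k * P ∣ (5 * P + 1) ^ 2 - 4 * P * (1 + 4 * y) ^ 2) :
    k = 1 ∧ P = 5 ∨ k = 2 ∨ k = 1 ∧ 3 * P = 4 * (1 + 4 * y) ^ 2 + 3 ∨
      k = 3 ∧ 7 * P = 4 * (1 + 4 * y) ^ 2 - 1 ∨ k = 4 ∧ P = 4 * (1 + 4 * y) ^ 2 + 1 := by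
  have hP5 : 5 ≤ P := by have := sq_nonneg y; omega
  obtain ⟨l, hl⟩ := exists_cofactor_of_one_add_mul_dvd (P := P) (m := 2 * k)
    (c := 25 * P + 10 - 4 * (1 + 4 * y) ^ 2) (by omega) (by convert hdvd using 1; ring)
  have hl8 := cofactor_emod_eight hP8 hl
  have hl3 : 3 ≤ l := by have := cofactor_nonneg hk hP hl; omega
  have hkl := mul_cofactor_le hk hl3 hP5 hl
  have hl12 : l ≤ 12 := by nlinarith
  have hk4 : k ≤ 4 := by nlinarith
  obtain rfl | rfl : l = 3 ∨ l = 11 := by omega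
  · interval_cases k
    · exact .inl ⟨rfl, eq_five_of_nineteen_mul hP (by linarith)⟩
    · exact .inr (.inl rfl)
    · exact .inr (.inr (.inr (.inl ⟨rfl, by linarith⟩)))
    · exact .inr (.inr (.inr (.inr ⟨rfl, by linarith⟩)))
  · obtain rfl : k = 1 := by omega
    exact .inr (.inr (.inl ⟨rfl, by linarith⟩))

end Cofactor

theorem lemma7
    (p : ℕ) (hp : p.Prime) (hp8 : p % 8 = 5)
    (x y : ℤ) (hx : x % 4 = 1) (hxy : (p : ℤ) = x ^ 2 + 4 * y ^ 2)
    (θ : ℕ) (hθ : IsPrimitiveRoot (θ : ZMod p) (p - 1))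
    (hy : 16 * (((cycD p θ 0).filter (fun a => (a + 1) % p ∈ cycD p θ 1)).card : ℤ)
        = (p : ℤ) + 1 + 2 * x - 8 * y)
    (d : ℤ) (hd : Prime d) (hd3 : 3 < d)
    (hdvd : d ∣ (Int.gcd (1 + eta4 p θ 2 + 2 * eta4 p θ 1 + 3 * eta4 p θ 0) (((4 : ℤ) ^ p - 1) / 3) : ℤ)) :
    d = 11 ∨ (d = 1 + 2 * (p : ℤ) ∧ 3 * (p : ℤ) = 4 * (1 + 4 * y) ^ 2 + 3) ∨
      (d = 1 + 6 * (p : ℤ) ∧ 7 * (p : ℤ) = 4 * (1 + 4 * y) ^ 2 - 1) ∨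
      (d = 1 + 8 * (p : ℤ) ∧ (p : ℤ) = 4 * (1 + 4 * y) ^ 2 + 1) := by
  lift d to ℕ using by linarith with n
  have : Fact p.Prime := ⟨hp⟩
  have : Fact n.Prime := ⟨Nat.prime_iff_prime_int.mpr hd⟩
  have hn3 : 3 < n := by exact_mod_cast hd3
  have hodd : Odd p := Nat.odd_iff.mpr (by omega)
  have hU := hdvd.trans (Int.gcd_dvd_left _ _)
  have h3 : (3 : ℤ) ∣ 4 ^ p - 1 := by simpa using sub_dvd_pow_sub_pow (4 : ℤ) 1 p
  have h4 : (n : ℤ) ∣ 4 ^ p - 1 :=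
    (hdvd.trans (Int.gcd_dvd_right _ _)).trans (Int.ediv_dvd_of_dvd h3)
  have hrel := natCast_dvd_of_dvd_eta4_relation hp8 hx hxy hθ hy hn3 h4 hU
  have hne := ne_one_add_four_mul hodd h4
  obtain ⟨k, hk⟩ := two_mul_dvd_sub_one hn3 hp hodd h4
  have hnk : (n : ℤ) = 1 + 2 * k * p := by
    have : n = 1 + 2 * p * k := by omega
    rw [this]; push_cast; ring
  have hk0 : 0 < k := Nat.pos_of_ne_zero (by rintro rfl; omega)
  have hx2 : 0 < x ^ 2 := sq_pos_of_ne_zero (by rintro rfl; norm_num at hx)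
  rcases cofactor_cases (by omega) (by omega) (by omega) (hnk ▸ hrel) with
    ⟨hk, h⟩ | hk | ⟨hk, h⟩ | ⟨hk, h⟩ | ⟨hk, h⟩ <;>
  · rw [hk] at hnk
    omega
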